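/- Let M be the set of all functions f : ℕ → (ℕ → ℕ) with the metric d(f, g) = 0 if f = g and d(f, g) = 2^{-n₀} otherwise, where n₀ is the least n with f(n) ≠ g(n). For a binary relation φ on Baire space with ∀x ∃y φ(x, y), define O_n = {f ∈ M : ∃m φ(f(n), f(m))}. Then each O_n is open and dense in (M, d). -/

import Mathlib

open scoped Classical

/-- The metric on the space of sequences of elements of Baire space:
`d f g = 0` if `f = g` (pointwise), and `2^{-n₀}` otherwise, where `n₀` is the
least `n` with `f n ≠ g n`. -/
noncomputable def baireSeqDist (f g : ℕ → (ℕ → ℕ)) : ℝ :=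
  if h : ∃ n, f n ≠ g n then (1 / 2 : ℝ) ^ (Nat.find h) else 0

/-!
The metric `d` induces the product topology for the discrete topology on the values. For fixed `m`
the condition `φ (f n) (f m)` constrains two coordinates only, so `O_n` is a union of open sets. For
density, replace the value of `f` at an index `m ≠ n` by some `y` with `φ (f n) y`: this puts the
sequence in `O_n`, and as `m` grows the modified sequences converge to `f`.
-/

open Filter Function Topology

attribute [local instance] PiNat.dist

section WitnessSet

variable {ι α : Type*} {φ : α → α → Prop}

/-- The set `O_i` of families `f` having some `f j` as a `φ`-witness for `f i`, over an arbitrary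
index type `ι`. The index `j = i` is allowed. -/
def witnessSet (φ : α → α → Prop) (i : ι) : Set (ι → α) :=
  {f | ∃ j, φ (f i) (f j)}

theorem update_mem_witnessSet [DecidableEq ι] {f : ι → α} {i j : ι} {y : α} (hj : j ≠ i)
    (hy : φ (f i) y) : update f j y ∈ witnessSet φ i :=
  ⟨j, by rwa [update_of_ne hj.symm, update_self]⟩

theorem tendsto_update_cofinite_nhds [DecidableEq ι] [TopologicalSpace α] (f : ι → α) (y : α) :
    Tendsto (fun j => update f j y) cofinite (𝓝 f) := by
  refine tendsto_pi_nhds.2 fun k => tendsto_nhds_of_eventually_eq ?_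
  filter_upwards [eventually_cofinite_ne k] with j hj
  exact update_of_ne hj.symm y f

theorem isOpen_witnessSet [TopologicalSpace α] (hφ : IsOpen {p : α × α | φ p.1 p.2}) (i : ι) :
    IsOpen (witnessSet φ i) := by
  have continuous_pair (j : ι) : Continuous fun f : ι → α => (f i, f j) :=
    (continuous_apply i).prodMk (continuous_apply j)
  simpa only [witnessSet, Set.ofPred_exists, Set.preimage_ofPred_eq] using
    isOpen_iUnion fun j => hφ.preimage (continuous_pair j)

theorem dense_witnessSet [Infinite ι] [TopologicalSpace α] (hφ : ∀ x, ∃ y, φ x y) (i : ι) :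
    Dense (witnessSet φ i) := by
  intro f
  obtain ⟨y, hy⟩ := hφ (f i)
  refine mem_closure_of_tendsto (tendsto_update_cofinite_nhds f y) ?_
  filter_upwards [eventually_cofinite_ne i] with j hj
  exact update_mem_witnessSet hj hy

end WitnessSet

theorem dense_iff_dist {E : ℕ → Type*} [∀ n, TopologicalSpace (E n)]
    [∀ n, DiscreteTopology (E n)] {s : Set (∀ n, E n)} :
    Dense s ↔ ∀ x, ∀ r > 0, ∃ y, dist x y < r ∧ y ∈ s := by
  let _ : MetricSpace (∀ n, E n) := PiNat.metricSpace
  simp only [Metric.dense_iff, Set.Nonempty, Set.mem_inter_iff, Metric.mem_ball']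

theorem baireSeqDist_eq_dist (f g : ℕ → ℕ → ℕ) : baireSeqDist f g = dist f g := by
  simp only [baireSeqDist, dist, PiNat.firstDiff_def, ← ne_iff]
  split_ifs <;> rfl

theorem baireSeq_On_open_dense_general {α : Type*} {φ : α → α → Prop}
    (hφ : ∀ x, ∃ y, φ x y) (n : ℕ) :
    (∀ f : ℕ → α, (∃ m, φ (f n) (f m)) →
      ∃ r : ℝ, 0 < r ∧ ∀ g : ℕ → α, dist f g < r → ∃ m, φ (g n) (g m)) ∧
    (∀ f : ℕ → α, ∀ r : ℝ, 0 < r →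
      ∃ g : ℕ → α, dist f g < r ∧ ∃ m, φ (g n) (g m)) := by
  let _ : TopologicalSpace α := ⊥
  have : DiscreteTopology α := discreteTopology_bot α
  exact ⟨(PiNat.isOpen_iff_dist _).1 (isOpen_witnessSet (isOpen_discrete _) n),
    dense_iff_dist.1 (dense_witnessSet hφ n)⟩

/-- For a relation φ on Baire space with ∀x ∃y φ(x,y), each set
`O_n = {f : ∃ m, φ (f n) (f m)}` is open and dense in `(M, d)`. -/
theorem baireSeq_On_open_dense (φ : (ℕ → ℕ) → (ℕ → ℕ) → Prop)
    (hφ : ∀ x : ℕ → ℕ, ∃ y : ℕ → ℕ, φ x y) (n : ℕ) :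
    (∀ f : ℕ → (ℕ → ℕ), (∃ m, φ (f n) (f m)) →
      ∃ r : ℝ, 0 < r ∧ ∀ g : ℕ → (ℕ → ℕ), baireSeqDist f g < r →
        ∃ m, φ (g n) (g m)) ∧
    (∀ f : ℕ → (ℕ → ℕ), ∀ r : ℝ, 0 < r →
      ∃ g : ℕ → (ℕ → ℕ), baireSeqDist f g < r ∧ ∃ m, φ (g n) (g m)) := by
  simpa only [baireSeqDist_eq_dist] using baireSeq_On_open_dense_general hφ n
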